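/- Fix u, v > 0 and real numbers A¹₁₁, A¹₁₂, A¹₂₂, A²₁₁, A²₁₂, A²₂₂. In ℝ⁸ with standard basis e₁, e₂, e₃, e₄, f₁, f₂, f₃, f₄, for (t₁,t₂) ∈ ℝ² define E₁ = e₁ + (t₁/2)[(−A¹₁₁ − A²₁₂) f₃ + (−A²₁₁ + A¹₁₂) f₄] + (t₂/2)[(A²₁₁ − A¹₁₂) f₃ + (−A¹₁₁ − A²₁₂) f₄], E₂ = e₂ + (t₁/2)[(−A¹₁₂ − A²₂₂) f₃ + (−A²₁₂ + A¹₂₂) f₄] + (t₂/2)[(A²₁₂ − A¹₂₂) f₃ + (−A¹₁₂ − A²₂₂) f₄], F₁ = f₁, F₂ = f₂. Then the 4-dimensional subspace span_ℝ{E₁, E₂, F₁, F₂} is closed under the triple cross product X_{u,v} for every (t₁,t₂) ∈ ℝ² if and only if A¹₁₁ + A¹₂₂ = 0 and A²₁₁ + A²₂₂ = 0. (This is the pointwise linear-algebra content of the theorem that the rank-2 subbundle 𝒮⁻⁺ over a surface Σ ⊂ S⁴ is Cayley in the negative spinor bundle 𝒮⁻(S⁴) with the Bryant–Salamon Spin(7)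 metric if and only if Σ is minimal.) -/

import Mathlib

/-!
STATEMENT 15: the pointwise linear-algebra content of: the rank-2 subbundle
𝒮⁻⁺ over a surface Σ ⊂ S⁴ is Cayley in the negative spinor bundle 𝒮⁻(S⁴)
with the Bryant–Salamon Spin(7) metric iff Σ is minimal.
-/

noncomputable section

/-- ℝ⁸ with coordinates (x₁,…,x₄,y₁,…,y₄) indexed 0,…,7. -/
abbrev V8 := Fin 8 → ℝ

/-- Standard basis vector (e₁,…,e₄,f₁,…,f₄ for k = 0,…,7). -/
def e8 (k : Fin 8) : V8 := fun j => if j = k then 1 else 0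

/-- The wedge of four coordinate 1-forms. -/
def form4 (p q r s : Fin 8) (a b c d : V8) : ℝ :=
  Matrix.det !![a p, a q, a r, a s; b p, b q, b r, b s;
                c p, c q, c r, c s; d p, d q, d r, d s]

/-- The Bryant–Salamon Spin(7) 4-form
Φ_{u,v} = u⁴ e¹∧e²∧e³∧e⁴ + u²v² [(e¹∧e² − e³∧e⁴)∧(f¹∧f² − f³∧f⁴)
  + (e¹∧e³ − e⁴∧e²)∧(f¹∧f³ − f⁴∧f²) + (e¹∧e⁴ − e²∧e³)∧(f¹∧f⁴ − f²∧f³)]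
  + v⁴ f¹∧f²∧f³∧f⁴. -/
def PhiBS (u v : ℝ) (a b c d : V8) : ℝ :=
  u ^ 4 * form4 0 1 2 3 a b c d
    + u ^ 2 * v ^ 2 * (form4 0 1 4 5 a b c d - form4 0 1 6 7 a b c d
        - form4 2 3 4 5 a b c d + form4 2 3 6 7 a b c d
        + form4 0 2 4 6 a b c d - form4 0 2 7 5 a b c d
        - form4 3 1 4 6 a b c d + form4 3 1 7 5 a b c d
        + form4 0 3 4 7 a b c d - form4 0 3 5 6 a b c d
        - form4 1 2 4 7 a b c d + form4 1 2 5 6 a b c d)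
    + v ^ 4 * form4 4 5 6 7 a b c d

/-- The triple cross product X_{u,v} determined by
g_{u,v}(X_{u,v}(a,b,c), z) = Φ_{u,v}(a,b,c,z), where
g_{u,v} = u²(dx₁²+⋯+dx₄²) + v²(dy₁²+⋯+dy₄²). -/
def XBS (u v : ℝ) (a b c : V8) : V8 :=
  fun k => PhiBS u v a b c (e8 k) / (if (k : ℕ) < 4 then u ^ 2 else v ^ 2)

theorem mem_span_aux (p q r s : ℝ) (w : V8) :
    w ∈ Submodule.span ℝ ({e8 0 + p • e8 6 + q • e8 7, e8 1 + r • e8 6 + s • e8 7,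
      e8 4, e8 5} : Set V8) ↔
    (w 2 = 0 ∧ w 3 = 0 ∧ w 6 = p * w 0 + r * w 1 ∧ w 7 = q * w 0 + s * w 1) := by
  simp only [Submodule.mem_span_insert, Submodule.mem_span_singleton]
  constructor
  · rintro ⟨a, _, ⟨b, _, ⟨c, _, ⟨d, rfl⟩, rfl⟩, rfl⟩, rfl⟩
    simp [e8]
    constructor <;> ring
  · rintro ⟨h2, h3, h6, h7⟩
    refine ⟨w 0, _, ⟨w 1, _, ⟨w 4, _, ⟨w 5, rfl⟩, rfl⟩, rfl⟩, ?_⟩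
    funext j
    fin_cases j <;> simp [e8, h2, h3, h6, h7] <;> ring

theorem form4_eq (p q r s : Fin 8) (a b c d : V8) : form4 p q r s a b c d =
    d s * (a p * (b q * c r - b r * c q) - a q * (b p * c r - b r * c p)
      + a r * (b p * c q - b q * c p))
    - d r * (a p * (b q * c s - b s * c q) - a q * (b p * c s - b s * c p)
      + a s * (b p * c q - b q * c p))
    + d q * (a p * (b r * c s - b s * c r) - a r * (b p * c s - b s * c p)
      + a s * (b p * c r - b r * c p))
    - d p * (a q * (b r * c s - b s * c r) - a r * (b q * c s - b s * c q)
      + a s * (b q * c r - b r * c q)) := by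
  simp [form4, Matrix.det_succ_row_zero, Fin.sum_univ_succ, Fin.succAbove]
  ring

theorem stmt15 (u v : ℝ) (hu : 0 < u) (hv : 0 < v)
    (A111 A112 A122 A211 A212 A222 : ℝ) :
    (∀ t1 t2 : ℝ, ∀ S : Submodule ℝ V8,
      S = Submodule.span ℝ
        ({e8 0 + (t1 / 2) • ((-A111 - A212) • e8 6 + (-A211 + A112) • e8 7)
              + (t2 / 2) • ((A211 - A112) • e8 6 + (-A111 - A212) • e8 7),
          e8 1 + (t1 / 2) • ((-A112 - A222) • e8 6 + (-A212 + A122) • e8 7)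
              + (t2 / 2) • ((A212 - A122) • e8 6 + (-A112 - A222) • e8 7),
          e8 4, e8 5} : Set V8) →
      ∀ a ∈ S, ∀ b ∈ S, ∀ c ∈ S, XBS u v a b c ∈ S)
    ↔ (A111 + A122 = 0 ∧ A211 + A222 = 0) := by
  have key : ∀ t1 t2 : ℝ,
      ({e8 0 + (t1 / 2) • ((-A111 - A212) • e8 6 + (-A211 + A112) • e8 7)
              + (t2 / 2) • ((A211 - A112) • e8 6 + (-A111 - A212) • e8 7),
          e8 1 + (t1 / 2) • ((-A112 - A222) • e8 6 + (-A212 + A122) • e8 7)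
              + (t2 / 2) • ((A212 - A122) • e8 6 + (-A112 - A222) • e8 7),
          e8 4, e8 5} : Set V8) =
      {e8 0 + ((t1 / 2) * (-A111 - A212) + (t2 / 2) * (A211 - A112)) • e8 6
            + ((t1 / 2) * (-A211 + A112) + (t2 / 2) * (-A111 - A212)) • e8 7,
       e8 1 + ((t1 / 2) * (-A112 - A222) + (t2 / 2) * (A212 - A122)) • e8 6
            + ((t1 / 2) * (-A212 + A122) + (t2 / 2) * (-A112 - A222)) • e8 7,
       e8 4, e8 5} := by
    intro t1 t2
    congr 1
    · module
    · congr 1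
      module
  have hu' : u ≠ 0 := hu.ne'
  have hv' : v ≠ 0 := hv.ne'
  constructor
  · intro h
    have main : ∀ t1 t2 : ℝ, t1 * (A211 + A222) + t2 * (A111 + A122) = 0 := by
      intro t1 t2
      have h1 := h t1 t2 _ rfl _ (Submodule.subset_span (Set.mem_insert _ _))
        (e8 4) (Submodule.subset_span (by simp)) (e8 5) (Submodule.subset_span (by simp))
      rw [key, mem_span_aux] at h1
      obtain ⟨-, -, h6, -⟩ := h1
      simp [XBS, PhiBS, form4_eq, e8] at h6
      field_simp at h6
      linarith
    have m1 := main 1 0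
    have m2 := main 0 1
    constructor <;> linarith
  · rintro ⟨h1, h2⟩ t1 t2 S rfl
    rw [key]
    obtain rfl : A122 = -A111 := by linarith
    obtain rfl : A222 = -A211 := by linarith
    intro a ha b hb c hc
    rw [mem_span_aux] at *
    generalize hp : (t1 / 2) * (-A111 - A212) + (t2 / 2) * (A211 - A112) = p at *
    generalize hq : (t1 / 2) * (-A211 + A112) + (t2 / 2) * (-A111 - A212) = q at *
    have hr : (t1 / 2) * (-A112 - -A211) + (t2 / 2) * (A212 - -A111) = -q := by
      rw [← hq]; ring
    have hs : (t1 / 2) * (-A212 + -A111) + (t2 / 2) * (-A112 - -A211) = p := by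
      rw [← hp]; ring
    rw [hr, hs] at ha hb hc ⊢
    obtain ⟨a2, a3, a6, a7⟩ := ha
    obtain ⟨b2, b3, b6, b7⟩ := hb
    obtain ⟨c2, c3, c6, c7⟩ := hc
    refine ⟨?_, ?_, ?_, ?_⟩ <;>
      simp [XBS, PhiBS, form4_eq, e8, a2, a3, a6, a7, b2, b3, b6, b7, c2, c3, c6, c7, hu', hv'] <;>
      field_simp <;> ring
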